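/- arXiv:2409.01678 — 3 statements merged into one kernel-verified Lean document; each statement's English description precedes it below -/
import Mathlib

section
/- For any three trees T_1, T_2, T_3 on n vertices each, there exists a planar graph on at most ⌊3n/2⌋ vertices containing each T_i as a subgraph. -/
open SimpleGraph

def HasMinor {V W : Type*} (G : SimpleGraph V) (H : SimpleGraph W) : Prop :=
  ∃ f : W → Set V,
    (∀ w, (f w).Nonempty) ∧
    (∀ w, (G.induce (f w)).Connected) ∧
    (Pairwise fun w₁ w₂ => Disjoint (f w₁) (f w₂)) ∧
    ∀ ⦃w₁ w₂⦄, H.Adj w₁ w₂ → ∃ a ∈ f w₁, ∃ b ∈ f w₂, G.Adj a b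

def IsPlanar {V : Type*} (G : SimpleGraph V) : Prop :=
  ¬ HasMinor G (completeGraph (Fin 5)) ∧
  ¬ HasMinor G (completeBipartiteGraph (Fin 3) (Fin 3))

def IsOuterplanar {V : Type*} (G : SimpleGraph V) : Prop :=
  ¬ HasMinor G (completeGraph (Fin 4)) ∧
  ¬ HasMinor G (completeBipartiteGraph (Fin 2) (Fin 3))

def Contains {V W : Type*} (G : SimpleGraph V) (H : SimpleGraph W) : Prop :=
  ∃ f : W ↪ V, ∀ ⦃a b⦄, H.Adj a b → G.Adj (f a) (f b)

/-- The caterpillar with spine a path on `k` vertices, each spine vertex having `m` leaves. -/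
def caterpillar (k m : ℕ) : SimpleGraph (Fin k ⊕ Fin k × Fin m) :=
  SimpleGraph.fromRel (fun a b =>
    match a, b with
    | Sum.inl i, Sum.inl j => (i : ℕ) + 1 = (j : ℕ)
    | Sum.inl i, Sum.inr p => i = p.1
    | _, _ => False)

/-!
If `G` has a drawing in which any two disjoint edges cross an even number of times, then so has
every minor of `G`, since edges can be routed along walks of `G`. In the complete graph on five
vertices and in `K₃,₃`, however, the number of crossings of disjoint edges is odd in total.

Such a drawing is obtained from three graphs with one-page book embeddings as follows. Place
`⌊n / 2⌋` vertices on each of three rays from a common origin, with a vertex at the origin when `n`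
is odd. Every two rays bound a half-plane and carry `n` vertices, in whose order one of the graphs
is drawn in that half-plane. A tree has a one-page book embedding, as a leaf may be inserted
immediately after its neighbour.
-/

/-- A certificate modulo 2 that `G` has a drawing in which disjoint edges cross an even number of
times. Start from the chords of vertices in convex position, ordered by `before`, and move each edge
`uv` across the vertices `x` with `moves u v x = 1`: then `even_crossing` says that the moves
change the number of crossings of `uv` and `xy` by as much as the chords contribute. The relation
`before` need not be transitive. -/
structure EvenDrawing {V : Type*} (G : SimpleGraph V) where
  before : V → V → ZMod 2
  moves : V → V → V → ZMod 2
  before_add_swap : ∀ ⦃u v⦄, u ≠ v → before u v + before v u = 1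
  even_crossing : ∀ ⦃u v x y⦄, G.Adj u v → G.Adj x y → u ≠ x → u ≠ y → v ≠ x → v ≠ y →
    moves u v x + moves u v y + moves x y u + moves x y v =
      before u x + before u y + before v x + before v y

namespace EvenDrawing

section Walk

variable {V : Type*} {G : SimpleGraph V}

/-- The number modulo 2 of moves across `x` made by the edges of a walk. -/
def walkMoves (D : EvenDrawing G) {u v : V} (p : G.Walk u v) (x : V) : ZMod 2 :=
  (p.darts.map fun d => D.moves d.fst d.snd x).sum

@[simp]
lemma walkMoves_nil (D : EvenDrawing G) (u x : V) : D.walkMoves (Walk.nil : G.Walk u u) x = 0 := rfl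

@[simp]
lemma walkMoves_cons (D : EvenDrawing G) {u v t : V} (h : G.Adj u v) (p : G.Walk v t) (x : V) :
    D.walkMoves (Walk.cons h p) x = D.moves u v x + D.walkMoves p x := by
  simp only [walkMoves, Walk.darts_cons, List.map_cons, List.sum_cons]

lemma even_crossing_adj_walk (D : EvenDrawing G) {u v x y : V} (huv : G.Adj u v) (q : G.Walk x y)
    (hu : u ∉ q.support) (hv : v ∉ q.support) :
    D.moves u v x + D.moves u v y + D.walkMoves q u + D.walkMoves q v =
      D.before u x + D.before u y + D.before v x + D.before v y := by
  induction q with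
  | nil =>
    simp only [walkMoves_nil]
    grind
  | @cons x z y hxz q ih =>
    simp only [Walk.support_cons, List.mem_cons, not_or] at hu hv
    have hz := q.start_mem_support
    have edge := D.even_crossing huv hxz hu.1 (ne_of_mem_of_not_mem hz hu.2).symm hv.1
      (ne_of_mem_of_not_mem hz hv.2).symm
    have rest := ih hu.2 hv.2
    simp only [walkMoves_cons]
    grind

lemma even_crossing_walk (D : EvenDrawing G) {u v x y : V} (p : G.Walk u v) (q : G.Walk x y)
    (hpq : p.support.Disjoint q.support) :
    D.walkMoves p x + D.walkMoves p y + D.walkMoves q u + D.walkMoves q v =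
      D.before u x + D.before u y + D.before v x + D.before v y := by
  induction p with
  | nil =>
    simp only [walkMoves_nil]
    grind
  | cons huz p ih =>
    rw [Walk.support_cons, List.disjoint_cons_left] at hpq
    have edge := D.even_crossing_adj_walk huz q hpq.1 (hpq.2 p.start_mem_support)
    have rest := ih hpq.2
    simp only [walkMoves_cons]
    grind

end Walk

end EvenDrawing

section Minor

variable {V W : Type*} {G : SimpleGraph V} {H : SimpleGraph W}

lemma exists_walk_of_connected_induce {s : Set V} (hs : (G.induce s).Connected) {a b : V}
    (ha : a ∈ s) (hb : b ∈ s) : ∃ p : G.Walk a b, ∀ x ∈ p.support, x ∈ s := by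
  obtain ⟨p⟩ := hs.preconnected ⟨a, ha⟩ ⟨b, hb⟩
  let incl : G.induce s →g G := ⟨Subtype.val, id⟩
  refine ⟨p.map incl, fun x hx => ?_⟩
  rw [Walk.support_map, List.mem_map] at hx
  obtain ⟨y, -, rfl⟩ := hx
  exact y.2

lemma HasMinor.exists_disjoint_walks (h : HasMinor G H) :
    ∃ (r : W → V) (p : ∀ i j, H.Adj i j → G.Walk (r i) (r j)), r.Injective ∧
      ∀ i j k l (hij : H.Adj i j) (hkl : H.Adj k l), i ≠ k → i ≠ l → j ≠ k → j ≠ l →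
        (p i j hij).support.Disjoint (p k l hkl).support := by
  obtain ⟨f, hne, hconn, hdisj, hadj⟩ := h
  choose r hr using hne
  have hwalk : ∀ i j, H.Adj i j →
      ∃ p : G.Walk (r i) (r j), ∀ x ∈ p.support, x ∈ f i ∨ x ∈ f j := by
    intro i j hij
    obtain ⟨a, ha, c, hc, hac⟩ := hadj hij
    obtain ⟨p, hp⟩ := exists_walk_of_connected_induce (hconn i) (hr i) ha
    obtain ⟨q, hq⟩ := exists_walk_of_connected_induce (hconn j) hc (hr j)
    refine ⟨p.append (Walk.cons hac q), fun x hx => ?_⟩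
    simp only [Walk.mem_support_append_iff, Walk.support_cons, List.mem_cons] at hx
    rcases hx with hx | rfl | hx
    exacts [.inl (hp x hx), .inl ha, .inr (hq x hx)]
  choose p hp using hwalk
  have eq_of_mem {i j x} (hi : x ∈ f i) (hj : x ∈ f j) : i = j :=
    hdisj.eq (Set.not_disjoint_iff.2 ⟨x, hi, hj⟩)
  refine ⟨r, p, fun i j hij => eq_of_mem (hr i) (hij ▸ hr j), ?_⟩
  intro i j k l hij hkl hik hil hjk hjl z hz hz'
  rcases hp i j hij z hz with h | h <;> rcases hp k l hkl z hz' with h' | h'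
  exacts [hik (eq_of_mem h h'), hil (eq_of_mem h h'), hjk (eq_of_mem h h'), hjl (eq_of_mem h h')]

lemma EvenDrawing.nonempty_of_hasMinor (D : EvenDrawing G) (h : HasMinor G H) :
    Nonempty (EvenDrawing H) := by
  classical
  obtain ⟨r, p, hr, hp⟩ := h.exists_disjoint_walks
  refine ⟨{
    before i j := D.before (r i) (r j)
    moves i j k := if hij : H.Adj i j then D.walkMoves (p i j hij) (r k) else 0
    before_add_swap i j hij := D.before_add_swap (hr.ne hij)
    even_crossing i j k l hij hkl hik hil hjk hjl := ?_ }⟩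
  simp only [hij, hkl, dif_pos]
  exact D.even_crossing_walk _ _ (hp i j k l hij hkl hik hil hjk hjl)

end Minor

namespace EvenDrawing

/- Add the relations for all fifteen pairs of disjoint edges. Given an edge `uv`, each of the three
other vertices lies on two edges disjoint from `uv`, so the moves cancel. In the other sum three
instances of `before_add_swap` survive. -/
instance isEmpty_completeGraph_five : IsEmpty (EvenDrawing (completeGraph (Fin 5))) := by
  refine ⟨fun D => one_ne_zero (α := ZMod 2) ?_⟩
  have e (u v x y : Fin 5) (h : u ≠ v ∧ x ≠ y ∧ u ≠ x ∧ u ≠ y ∧ v ≠ x ∧ v ≠ y := by decide) :=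
    D.even_crossing h.1 h.2.1 h.2.2.1 h.2.2.2.1 h.2.2.2.2.1 h.2.2.2.2.2
  have s (u v : Fin 5) (h : u ≠ v := by decide) := D.before_add_swap h
  linear_combination (norm := skip)
    e 0 1 2 3 + e 0 1 2 4 + e 0 1 3 4 + e 0 2 1 3 + e 0 2 1 4 + e 0 2 3 4 + e 0 3 1 2 + e 0 3 1 4 +
    e 0 3 2 4 + e 0 4 1 2 + e 0 4 1 3 + e 0 4 2 3 + e 1 2 3 4 + e 1 3 2 4 + e 1 4 2 3 +
    s 2 3 + s 2 4 + s 3 4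
  ring_nf
  reduce_mod_char

/- The same count over the eighteen pairs of disjoint edges of `K₃,₃`, where each of the four other
vertices again lies on two edges disjoint from `uv`. -/
instance isEmpty_completeBipartiteGraph_three_three :
    IsEmpty (EvenDrawing (completeBipartiteGraph (Fin 3) (Fin 3))) := by
  refine ⟨fun D => one_ne_zero (α := ZMod 2) ?_⟩
  have e (i j k l : Fin 3) (h : i ≠ k ∧ j ≠ l := by decide) :=
    D.even_crossing (u := .inl i) (v := .inr j) (x := .inl k) (y := .inr l) (by simp) (by simp)
      (by simpa using h.1) (by simp) (by simp) (by simpa using h.2)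
  have s (j l : Fin 3) (h : j ≠ l := by decide) :=
    D.before_add_swap (Sum.inr_injective (α := Fin 3) |>.ne h)
  linear_combination (norm := skip)
    e 0 0 1 1 + e 0 0 1 2 + e 0 1 1 0 + e 0 1 1 2 + e 0 2 1 0 + e 0 2 1 1 +
    e 0 0 2 1 + e 0 0 2 2 + e 0 1 2 0 + e 0 1 2 2 + e 0 2 2 0 + e 0 2 2 1 +
    e 1 0 2 1 + e 1 0 2 2 + e 1 1 2 0 + e 1 1 2 2 + e 1 2 2 0 + e 1 2 2 1 +
    s 0 1 + s 0 2 + s 1 2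
  ring_nf
  reduce_mod_char

lemma isPlanar {V : Type*} {G : SimpleGraph V} (D : EvenDrawing G) : IsPlanar G :=
  ⟨fun h => not_isEmpty_iff.2 (D.nonempty_of_hasMinor h) isEmpty_completeGraph_five,
    fun h => not_isEmpty_iff.2 (D.nonempty_of_hasMinor h)
      isEmpty_completeBipartiteGraph_three_three⟩

end EvenDrawing

section NonCrossing

/-- With the vertices placed in order along a line, the edges of `G` can be drawn as pairwise
noncrossing arcs on one side of it. -/
def NonCrossing {V : Type*} [LT V] (G : SimpleGraph V) : Prop :=
  ∀ ⦃a b c d⦄, a < b → b < c → c < d → G.Adj a c → ¬ G.Adj b d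

/-- `G` admits a one-page book embedding. -/
def HasOnePageEmbedding {V : Type*} (G : SimpleGraph V) : Prop :=
  ∃ _ : LinearOrder V, NonCrossing G

variable {V W : Type*} {G : SimpleGraph V}

lemma NonCrossing.map [LinearOrder V] [Preorder W] (hG : NonCrossing G) (f : V ↪o W) :
    NonCrossing (G.map f) := by
  rintro _ _ _ _ hab hbc hcd ⟨-, a, c, hac, rfl, rfl⟩ ⟨-, b, d, hbd, rfl, rfl⟩
  rw [f.lt_iff_lt] at hab hbc hcd
  exact hG hab hbc hcd hac hbd

lemma HasOnePageEmbedding.exists_embedding_nonCrossing_map [Finite V] [LinearOrder W] [Fintype W]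
    (hG : HasOnePageEmbedding G) (hcard : Nat.card V ≤ Fintype.card W) :
    ∃ f : V ↪ W, NonCrossing (G.map f) := by
  obtain ⟨_, hG⟩ := hG
  have := Fintype.ofFinite V
  rw [Nat.card_eq_fintype_card] at hcard
  let f : V ↪o W := (Fintype.orderIsoFinOfCardEq V rfl).symm.toOrderEmbedding.trans <|
    (Fin.castLEOrderEmb hcard).trans (Fintype.orderIsoFinOfCardEq W rfl).toOrderEmbedding
  exact ⟨f.toEmbedding, hG.map f⟩

lemma exists_linearOrder_covBy {u v : V} (huv : u ≠ v) (ord : LinearOrder ({v}ᶜ : Set V)) :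
    ∃ _ : LinearOrder V, u ⋖ v ∧ ∀ x y : ({v}ᶜ : Set V), (x : V) < y ↔ ord.lt x y := by
  classical
  let σ : V → ({v}ᶜ : Set V) ×ₗ Bool := fun x =>
    if hx : x = v then toLex (⟨u, huv⟩, true) else toLex (⟨x, hx⟩, false)
  have σ_v : σ v = toLex (⟨u, huv⟩, true) := dif_pos rfl
  have σ_ne {x} (hx : x ≠ v) : σ x = toLex (⟨x, hx⟩, false) := dif_neg hx
  have σ_inj : σ.Injective := by
    intro x y hxy
    by_cases hx : x = v <;> by_cases hy : y = v
    · rw [hx, hy]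
    · simp [hx, σ_v, σ_ne hy] at hxy
    · simp [hy, σ_v, σ_ne hx] at hxy
    · rw [σ_ne hx, σ_ne hy] at hxy
      exact congrArg (fun z => ((ofLex z).1 : V)) hxy
  have σ_lt_iff {x y} (hx : x ≠ v) (hy : y ≠ v) : σ x < σ y ↔ ord.lt ⟨x, hx⟩ ⟨y, hy⟩ := by
    simp [σ_ne hx, σ_ne hy, Prod.Lex.toLex_lt_toLex]
  have σ_lt_v_iff {x} (hx : x ≠ v) : σ x < σ v ↔ ¬ σ u < σ x := by
    rw [σ_lt_iff huv hx, not_lt, le_iff_lt_or_eq]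
    simp [σ_ne hx, σ_v, Prod.Lex.toLex_lt_toLex]
  have σ_u_lt_σ_v : σ u < σ v := (σ_lt_v_iff huv).2 (lt_irrefl _)
  let _ : LinearOrder V := LinearOrder.lift' σ σ_inj
  exact ⟨inferInstance,
    ⟨σ_u_lt_σ_v, fun x hux hxv => (σ_lt_v_iff hxv.ne).1 hxv hux⟩,
    fun x y => σ_lt_iff x.2 y.2⟩

lemma NonCrossing.of_covBy [LinearOrder V] {u v : V} (huv : u ⋖ v)
    (hv : ∀ x, G.Adj v x → x = u) (hG : NonCrossing (G.induce {v}ᶜ)) : NonCrossing G := by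
  have ne_of_between {a x c : V} (hax : a < x) (hxc : x < c) (hac : G.Adj a c) :
      a ≠ v ∧ c ≠ v := by
    refine ⟨?_, ?_⟩
    · rintro rfl
      obtain rfl := hv c hac
      exact (hax.trans hxc).not_gt huv.lt
    · rintro rfl
      obtain rfl := hv a hac.symm
      exact huv.2 hax hxc
  intro a b c d hab hbc hcd hac hbd
  obtain ⟨ha, hc⟩ := ne_of_between hab hbc hac
  obtain ⟨hb, hd⟩ := ne_of_between hbc hcd hbd
  exact @hG ⟨a, ha⟩ ⟨b, hb⟩ ⟨c, hc⟩ ⟨d, hd⟩ hab hbc hcd hac hbd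

lemma HasOnePageEmbedding.of_pendant {u v : V} (huv : u ≠ v) (hv : ∀ x, G.Adj v x → x = u)
    (hG : HasOnePageEmbedding (G.induce {v}ᶜ)) : HasOnePageEmbedding G := by
  obtain ⟨ord, hG⟩ := hG
  obtain ⟨_, covBy, lt_iff⟩ := exists_linearOrder_covBy huv ord
  exact ⟨inferInstance, .of_covBy covBy hv fun a b c d hab hbc hcd =>
    hG ((lt_iff a b).1 hab) ((lt_iff b c).1 hbc) ((lt_iff c d).1 hcd)⟩

lemma exists_pendant_of_isAcyclic [Finite V] [Nontrivial V] (hG : G.IsAcyclic) :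
    ∃ u v, u ≠ v ∧ ∀ x, G.Adj v x → x = u := by
  classical
  have := Fintype.ofFinite V
  obtain ⟨T, hGT, -, hT⟩ := connected_top.exists_isTree_le_of_le_of_isAcyclic le_top hG
  obtain ⟨v, hv⟩ := hT.exists_vert_degree_one_of_nontrivial
  obtain ⟨u, hvu, hu⟩ := degree_eq_one_iff_existsUnique_adj.1 hv
  exact ⟨u, v, hvu.ne', fun x hvx => hu x (hGT hvx)⟩

lemma hasOnePageEmbedding_of_isAcyclic [Finite V] (hG : G.IsAcyclic) : HasOnePageEmbedding G := by
  induction h : Nat.card V using Nat.strong_induction_on generalizing V with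
  | _ k ih =>
    rcases subsingleton_or_nontrivial V with hV | hV
    · let _ : LinearOrder V := LinearOrder.lift' (fun _ => 0) (Function.injective_of_subsingleton _)
      exact ⟨inferInstance, fun a b _ _ hab => (hab.ne (Subsingleton.elim a b)).elim⟩
    · obtain ⟨u, v, huv, hv⟩ := exists_pendant_of_isAcyclic hG
      exact .of_pendant huv hv <|
        ih _ (h ▸ Finite.card_subtype_lt (x := v) (by simp)) (hG.induce _) rfl

/-- The indicator of `a < b` modulo 2. -/
def ltParity {α : Type*} [LinearOrder α] (a b : α) : ZMod 2 := if a < b then 1 else 0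

lemma ltParity_add_swap {α : Type*} [LinearOrder α] {a b : α} (h : a ≠ b) :
    ltParity a b + ltParity b a = 1 := by
  rcases h.lt_or_gt with h | h <;> simp [ltParity, h, h.not_gt]

lemma NonCrossing.sum_ltParity [LinearOrder V] (hG : NonCrossing G) {u v x y : V}
    (huv : G.Adj u v) (hxy : G.Adj x y) (hux : u ≠ x) (huy : u ≠ y) (hvx : v ≠ x) (hvy : v ≠ y) :
    ltParity u x + ltParity u y + ltParity v x + ltParity v y = 0 := by
  wlog huv' : u ≤ v generalizing u v
  · have := this huv.symm hvx hvy hux huy (le_of_not_ge huv')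
    grind
  wlog hxy' : x ≤ y generalizing x y
  · have := this hxy.symm huy hux hvy hvx (le_of_not_ge hxy')
    grind
  have := @hG u x v y
  have := @hG x u y v
  unfold ltParity
  rcases hux.lt_or_gt with hux | hux <;> rcases huy.lt_or_gt with huy | huy <;>
    rcases hvx.lt_or_gt with hvx | hvx <;> rcases hvy.lt_or_gt with hvy | hvy <;>
    grind

end NonCrossing

section Pages

variable {ι L V : Type*} [LinearOrder L]

/-- Data by which edges drawn on several pages combine to an `EvenDrawing`. The vertices of page `i`
are the `f i a`, in the order of `L`, and an edge of the page with ends `f i a` and `f i c` moves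
across the vertices `x` with `pass i a x + pass i c x = 1`. Splitting the moves between the ends
allows the crossings of two edges to be counted one pair of ends at a time. For edges of one page
they reduce to the crossings on that page, expressed by `ltParity`; for edges of different pages
each of the four pairs of ends contributes the same `ε`, and these cancel. -/
structure PageSystem (before : V → V → ZMod 2) (f : ι → L ↪ V) where
  pass : ι → L → V → ZMod 2
  before_add_swap : ∀ ⦃x y⦄, x ≠ y → before x y + before y x = 1
  pass_self : ∀ i ⦃a c⦄, a ≠ c →
    pass i a (f i c) + pass i c (f i a) = before (f i a) (f i c) + ltParity a c
  pass_of_ne : ∀ ⦃i j⦄, i ≠ j → ∃ ε, ∀ a c, f i a ≠ f j c →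
    pass i a (f j c) + pass j c (f i a) = before (f i a) (f j c) + ε

lemma PageSystem.nonempty_evenDrawing {before : V → V → ZMod 2} {f : ι → L ↪ V}
    (P : PageSystem before f) {G : ι → SimpleGraph L} (hG : ∀ i, NonCrossing (G i)) :
    Nonempty (EvenDrawing (⨆ i, (G i).map (f i))) := by
  have hmoves : ∀ u v, ∃ w : V → ZMod 2, (⨆ i, (G i).map (f i)).Adj u v →
      ∃ i a c, (G i).Adj a c ∧ f i a = u ∧ f i c = v ∧
        w = fun x => P.pass i a x + P.pass i c x := by
    intro u v
    by_cases huv : (⨆ i, (G i).map (f i)).Adj u v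
    · obtain ⟨i, -, a, c, hac, hu, hv⟩ := iSup_adj.1 huv
      exact ⟨_, fun _ => ⟨i, a, c, hac, hu, hv, rfl⟩⟩
    · exact ⟨0, fun h => absurd h huv⟩
  choose moves hmoves using hmoves
  refine ⟨⟨before, moves, P.before_add_swap, fun u v x y huv hxy hux huy hvx hvy => ?_⟩⟩
  obtain ⟨i, a, c, hac, rfl, rfl, hm⟩ := hmoves _ _ huv
  obtain ⟨j, b, d, hbd, rfl, rfl, hm'⟩ := hmoves _ _ hxy
  rw [hm, hm']
  rcases eq_or_ne i j with rfl | hij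
  · rw [(f i).injective.ne_iff] at hux huy hvx hvy
    have cross := (hG i).sum_ltParity hac hbd hux huy hvx hvy
    linear_combination P.pass_self i hux + P.pass_self i huy + P.pass_self i hvx +
      P.pass_self i hvy + cross
  · obtain ⟨ε, hε⟩ := P.pass_of_ne hij
    linear_combination hε a b hux + hε a d huy + hε c b hvx + hε c d hvy +
      2 * ε * CharTwo.two_eq_zero (R := ZMod 2)

end Pages

section Tripod

variable (O R : Type*)

/-- The vertices on three rays, each a copy of `R`, with the common origin `O`. The origin is either
a single vertex or missing, so that a page can have any number of vertices. -/
abbrev Tripod : Type _ := O ⊕ Fin 3 × R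

/-- A line bounding a page, formed by two rays and the origin. -/
abbrev TripodLine : Type _ := Rᵒᵈ ⊕ₗ O ⊕ₗ R

namespace Tripod

open Sum OrderDual

variable {O R}

/-- The line bounding page `i` follows ray `i + 1` to the origin and leaves along ray `i + 2`. -/
def page (i : Fin 3) : TripodLine O R ↪ Tripod O R where
  toFun
    | inlₗ d => inr (i + 1, ofDual d)
    | inrₗ (inlₗ o) => inl o
    | inrₗ (inrₗ d) => inr (i + 2, d)
  inj' := by
    rintro (d | o | d) (e | o' | e) h <;> simp_all <;> rfl

@[simp]
lemma page_inlₗ (i : Fin 3) (d : Rᵒᵈ) :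
    page i (inlₗ d : TripodLine O R) = inr (i + 1, ofDual d) := rfl

@[simp]
lemma page_inrₗ_inlₗ (i : Fin 3) (o : O) : page i (inrₗ (inlₗ o) : TripodLine O R) = inl o := rfl

@[simp]
lemma page_inrₗ_inrₗ (i : Fin 3) (d : R) :
    page i (inrₗ (inrₗ d) : TripodLine O R) = inr (i + 2, d) := rfl

variable [LinearOrder R]

/-- The order of the vertices in the sense of `EvenDrawing`: the origin comes first, and each ray
precedes the cyclically next one, so the relation is not transitive. -/
def before : Tripod O R → Tripod O R → ZMod 2
  | inl _, _ => 1
  | inr _, inl _ => 0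
  | inr (i, d), inr (j, e) => if i = j then ltParity d e else if j = i + 1 then 1 else 0

lemma before_add_swap [Subsingleton O] {x y : Tripod O R} (h : x ≠ y) :
    before x y + before y x = 1 := by
  rcases x with o | ⟨i, d⟩ <;> rcases y with o' | ⟨j, e⟩
  · exact (h (congrArg inl (Subsingleton.elim o o'))).elim
  · rfl
  · rfl
  · rcases eq_or_ne i j with rfl | hij
    · have hde : d ≠ e := fun hde => h (by rw [hde])
      simpa [before] using ltParity_add_swap hde
    · have cyclic : j = i + 1 ↔ i ≠ j + 1 := by clear h; decide +revert
      by_cases h' : i = j + 1 <;> simp [before, hij, hij.symm, cyclic, h', add_assoc]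

variable [LinearOrder O]

/-- The share of the end `a` in the moves of an edge of page `i`. The shares of both ends add up to
a move across those vertices strictly between the ends that lie on ray `i + 1` or at the origin; the
value `1` on ray `i + 2` cancels. -/
def pass (i : Fin 3) (a : TripodLine O R) : Tripod O R → ZMod 2
  | inl o => ltParity (inrₗ (inlₗ o)) a
  | inr (j, d) => if j = i then 0 else if j = i + 1 then ltParity (inlₗ (toDual d)) a else 1

lemma pass_self [Subsingleton O] (i : Fin 3) {a c : TripodLine O R} (h : a ≠ c) :
    pass i a (page i c) + pass i c (page i a) = before (page i a) (page i c) + ltParity a c := by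
  have add_self (z : ZMod 2) : z + z = 0 := CharTwo.add_self_eq_zero z
  match a, c, h with
  | inlₗ d, inlₗ e, _ => simp [pass, before, ltParity]
  | inlₗ d, inrₗ (inlₗ o), _ => simp [pass, before, ltParity]
  | inlₗ d, inrₗ (inrₗ e), _ => simp [pass, before, ltParity, add_assoc, add_self]
  | inrₗ (inlₗ o), inlₗ d, _ => simp [pass, before, ltParity]
  | inrₗ (inlₗ o), inrₗ (inlₗ o'), h => exact (h (by rw [Subsingleton.elim o o'])).elim
  | inrₗ (inlₗ o), inrₗ (inrₗ d), _ => simp [pass, before, ltParity, add_self]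
  | inrₗ (inrₗ d), inlₗ e, _ => simp [pass, before, ltParity, add_assoc, add_self]
  | inrₗ (inrₗ d), inrₗ (inlₗ o), _ => simp [pass, before, ltParity, add_self]
  | inrₗ (inrₗ d), inrₗ (inrₗ e), _ => simp [pass, before, ltParity, add_self]

lemma pass_succ [Subsingleton O] (i : Fin 3) {a c : TripodLine O R}
    (h : page i a ≠ page (i + 1) c) :
    pass i a (page (i + 1) c) + pass (i + 1) c (page i a) = before (page i a) (page (i + 1) c) := by
  have add_self (z : ZMod 2) : z + z = 0 := CharTwo.add_self_eq_zero z
  match a, c, h with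
  | inlₗ d, inlₗ e, _ => simp [pass, before, add_assoc]
  | inlₗ d, inrₗ (inlₗ o), _ => simp [pass, before, ltParity, add_self]
  | inlₗ d, inrₗ (inrₗ e), _ => simp [pass, before, add_assoc, add_self]
  | inrₗ (inlₗ o), inlₗ d, _ => simp [pass, before, ltParity, add_assoc]
  | inrₗ (inlₗ o), inrₗ (inlₗ o'), h => exact (h (by rw [Subsingleton.elim o o']; simp)).elim
  | inrₗ (inlₗ o), inrₗ (inrₗ d), _ => simp [pass, before, ltParity, add_assoc]
  | inrₗ (inrₗ d), inlₗ e, h =>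
    have hde : d ≠ ofDual e := fun hde => h (by simp [hde, add_assoc])
    rcases hde.lt_or_gt with hde | hde <;>
      simp [pass, before, ltParity, add_assoc, toDual_lt, hde, hde.not_gt, add_self]
  | inrₗ (inrₗ d), inrₗ (inlₗ o), _ => simp [pass, before, ltParity, add_assoc, add_self]
  | inrₗ (inrₗ d), inrₗ (inrₗ e), _ => simp [pass, before, ltParity, add_assoc]

/-- The pages on three half-planes, each bounded by two of the rays. -/
def pageSystem [Subsingleton O] : PageSystem before (page (O := O) (R := R)) where
  pass := pass
  before_add_swap _ _ := before_add_swap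
  pass_self := pass_self
  pass_of_ne i j hij := by
    have cyclic : j = i + 1 ∨ i = j + 1 := by decide +revert
    rcases cyclic with rfl | rfl
    · exact ⟨0, fun a c hac => by rw [pass_succ i hac, add_zero]⟩
    · refine ⟨1, fun a c hac => ?_⟩
      rw [add_comm, pass_succ j hac.symm]
      grind [before_add_swap hac]

end Tripod

end Tripod

theorem three_trees_in_planar_graph_general (n : ℕ) {W : Fin 3 → Type*} [∀ i, Finite (W i)]
    (T : ∀ i, SimpleGraph (W i)) (hcard : ∀ i, Nat.card (W i) ≤ n)
    (hT : ∀ i, HasOnePageEmbedding (T i)) :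
    ∃ (V : Type) (_ : Fintype V) (G : SimpleGraph V),
      Fintype.card V ≤ 3 * n / 2 ∧ IsPlanar G ∧ ∀ i, Contains G (T i) := by
  have : Subsingleton (Fin (n % 2)) := Fin.subsingleton_iff_le_one.2 (by lia)
  have card_line : Fintype.card (TripodLine (Fin (n % 2)) (Fin (n / 2))) = n := by
    simp only [Fintype.card_lex, Fintype.card_sum, Fintype.card_orderDual, Fintype.card_fin]
    lia
  choose f hf using fun i => (hT i).exists_embedding_nonCrossing_map
    (W := TripodLine (Fin (n % 2)) (Fin (n / 2))) ((hcard i).trans_eq card_line.symm)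
  obtain ⟨D⟩ := Tripod.pageSystem.nonempty_evenDrawing hf
  refine ⟨Tripod (Fin (n % 2)) (Fin (n / 2)), inferInstance, _, ?_, D.isPlanar, fun i => ?_⟩
  · simp only [Fintype.card_sum, Fintype.card_prod, Fintype.card_fin]
    lia
  · exact ⟨(f i).trans (Tripod.page i), fun _ _ hab =>
      le_iSup (fun i => ((T i).map (f i)).map (Tripod.page i)) i
        (map_adj_apply.2 (map_adj_apply.2 hab))⟩

/-- For any three trees on `n` vertices each, there is a planar graph on at most `⌊3n/2⌋`
vertices containing each of them as a subgraph. -/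
theorem three_trees_in_planar_graph (n : ℕ) (hn : 1 ≤ n)
    (T₁ T₂ T₃ : SimpleGraph (Fin n)) (h₁ : T₁.IsTree) (h₂ : T₂.IsTree) (h₃ : T₃.IsTree) :
    ∃ (V : Type) (_ : Fintype V) (G : SimpleGraph V),
      Fintype.card V ≤ 3 * n / 2 ∧ IsPlanar G ∧
      Contains G T₁ ∧ Contains G T₂ ∧ Contains G T₃ := by
  obtain ⟨V, _, G, hV, hG, h⟩ := three_trees_in_planar_graph_general n ![T₁, T₂, T₃] (by simp)
    fun i => hasOnePageEmbedding_of_isAcyclic <| by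
      fin_cases i
      exacts [h₁.isAcyclic, h₂.isAcyclic, h₃.isAcyclic]
  exact ⟨V, inferInstance, G, hV, hG, h 0, h 1, h 2⟩
end

section
/- Any outerplanar graph that contains every n-vertex outerplanar graph as a subgraph has at least √2^{n−5} vertices, for n ≥ 6. -/
open SimpleGraph

/-!
A word `c` of sides describes a triangulated strip: vertices `0, 1, 2, …` are added one at a time
to one of the two sides, each new vertex forming a triangle with the last vertex on either side.
It is outerplanar because it has a noncrossing drawing with all vertices on a line: such drawings
pass to minors, and neither `K₄` nor `K₂,₃` has one.

In a graph without `K₄` minor, the two ends of a rung of an embedded strip separate the earlier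
vertices of the strip from the later ones: otherwise the earlier part, the later part (enlarged by a
connection between them) and the two ends are four pairwise adjacent branch sets. Hence embedded
strips are induced, and two strips with the same first and last vertex have the same vertices, since
removing any other vertex of one strip does not disconnect its ends. Such strips therefore coincide
if they start with the same alternating pattern, which excludes the only ambiguity at the first
triangle. So a host on `v` vertices contains at most `v ^ 2` of the `2 ^ (n - 5)` strips with this
pattern.
-/

section Connectivity

variable {V W : Type*} {G : SimpleGraph V} {H : SimpleGraph W}

lemma iff_of_connected_induce {A : Set V} (hA : (G.induce A).Connected) {P : V → Prop}
    (hP : ∀ u ∈ A, ∀ v ∈ A, G.Adj u v → (P u ↔ P v)) {x y : V} (hx : x ∈ A) (hy : y ∈ A) :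
    P x ↔ P y := by
  have along_walk {x y : A} (w : (G.induce A).Walk x y) : P x ↔ P y := by
    induction w with
    | nil => rfl
    | cons h _ ih => exact (hP _ (Subtype.prop _) _ (Subtype.prop _) h).trans ih
  obtain ⟨w⟩ := hA.preconnected ⟨x, hx⟩ ⟨y, hy⟩
  exact along_walk w

lemma connected_induce_of_forall_exists_lt [Preorder V] [WellFoundedLT V] {A : Set V} {r : V}
    (hr : r ∈ A) (h : ∀ x ∈ A, x ≠ r → ∃ y ∈ A, y < x ∧ G.Adj y x) :
    (G.induce A).Connected := by
  rw [connected_iff_exists_forall_reachable]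
  refine ⟨⟨r, hr⟩, fun ⟨x, hx⟩ => ?_⟩
  induction x using WellFoundedLT.induction with
  | ind x ih =>
    obtain rfl | hxr := eq_or_ne x r
    · exact Reachable.refl _
    · obtain ⟨y, hy, hyx, hadj⟩ := h x hx hxr
      exact (ih y hyx hy).trans (Adj.reachable (G := G.induce A) hadj)

lemma connected_induce_image {f : W → V} {A : Set W}
    (hf : ∀ a ∈ A, ∀ b ∈ A, H.Adj a b → G.Adj (f a) (f b)) (hA : (H.induce A).Connected) :
    (G.induce (f '' A)).Connected := by
  let φ : H.induce A →g G.induce (f '' A) :=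
    { toFun := fun x => ⟨f x, x, x.2, rfl⟩
      map_rel' := fun {a b} h => hf a a.2 b b.2 h }
  refine hA.map φ ?_
  rintro ⟨_, x, hx, rfl⟩
  exact ⟨⟨x, hx⟩, rfl⟩

lemma exists_connected_superset_adj {A B C : Set V} (hB : (G.induce B).Connected)
    (hC : (G.induce C).Connected) (hAB : Disjoint A B) (hAC : (A ∩ C).Nonempty)
    (hBC : (B ∩ C).Nonempty) :
    ∃ Y, B ⊆ Y ∧ Y ⊆ B ∪ C ∧ Disjoint A Y ∧ (G.induce Y).Connected ∧
      ∃ a ∈ A, ∃ y ∈ Y, G.Adj a y := by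
  obtain ⟨q, hqB, hqC⟩ := hBC
  obtain ⟨p, hpA, hpC⟩ := hAC
  -- Walk inside `C` from `B` to `A`, absorbing vertices into `B` until `A` is reached.
  have along_walk {x y : C} (w : (G.induce C).Walk x y) :
      ∀ B : Set V, (G.induce B).Connected → Disjoint A B → ↑x ∈ B → ↑y ∈ A →
        ∃ Y, B ⊆ Y ∧ Y ⊆ B ∪ C ∧ Disjoint A Y ∧ (G.induce Y).Connected ∧
          ∃ a ∈ A, ∃ y ∈ Y, G.Adj a y := by
    induction w with
    | nil => exact fun B _ hAB hxB hxA => (Set.disjoint_left.1 hAB hxA hxB).elim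
    | @cons x z y hxz _ ih =>
      intro B hB hAB hxB hyA
      by_cases hzA : ↑z ∈ A
      · exact ⟨B, subset_rfl, Set.subset_union_left, hAB, hB, z, hzA, x, hxB, hxz.symm⟩
      · obtain ⟨Y, hBY, hYBC, hY⟩ := ih (B ∪ {↑z})
          (connected_induce_union hB.preconnected (by simp)
            hxB rfl (show G.Adj x z from hxz))
          (Set.disjoint_union_right.2 ⟨hAB, Set.disjoint_singleton_right.2 hzA⟩) (Or.inr rfl) hyA
        refine ⟨Y, Set.subset_union_left.trans hBY, hYBC.trans ?_, hY⟩
        exact Set.union_subset (Set.union_subset Set.subset_union_left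
          (Set.singleton_subset_iff.2 (Or.inr z.2))) Set.subset_union_right
  obtain ⟨w⟩ := hC.preconnected ⟨q, hqC⟩ ⟨p, hpC⟩
  exact along_walk w B hB hAB hqB hpA

end Connectivity

section Drawings

variable {V W α : Type*} [LinearOrder α]

/-- The chords `a b` and `x y` of a line, drawn as arcs above it, do not cross. This is the intended
meaning, and is symmetric in the two chords, only if they have no end in common. -/
def Uncrossed (a b x y : α) : Prop :=
  x ∈ Set.uIoo a b ↔ y ∈ Set.uIoo a b

lemma Uncrossed.symm {a b x y : α} (h : Uncrossed a b x y) (hax : a ≠ x) (hay : a ≠ y)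
    (hbx : b ≠ x) (hby : b ≠ y) : Uncrossed x y a b := by
  simp only [Uncrossed, Set.uIoo, Set.mem_Ioo, inf_lt_iff, lt_sup_iff] at *
  grind

lemma not_uncrossed_of_uncrossed {a b x y : α} (hab : a ≠ b) (hax : a ≠ x) (hay : a ≠ y)
    (hbx : b ≠ x) (hby : b ≠ y) (hxy : x ≠ y) (h₁ : Uncrossed a x b y) (h₂ : Uncrossed a y b x) :
    ¬ Uncrossed a b x y := by
  simp only [Uncrossed, Set.uIoo, Set.mem_Ioo, inf_lt_iff, lt_sup_iff] at *
  grind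

/-- An outerplanar drawing: the vertices are placed at distinct points of a line, and edges without
a common end, drawn as arcs above the line, do not cross. -/
structure IsNoncrossingDrawing (G : SimpleGraph V) (pos : V → α) : Prop where
  injective : Function.Injective pos
  uncrossed : ∀ ⦃u v x y⦄, G.Adj u v → G.Adj x y → u ≠ x → u ≠ y → v ≠ x → v ≠ y →
    Uncrossed (pos u) (pos v) (pos x) (pos y)

namespace IsNoncrossingDrawing

variable {G : SimpleGraph V} {H : SimpleGraph W} {pos : V → α}

lemma comap (hpos : IsNoncrossingDrawing G pos) {f : W → V} (hf : Function.Injective f) :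
    IsNoncrossingDrawing (G.comap f) (pos ∘ f) where
  injective := hpos.injective.comp hf
  uncrossed _ _ _ _ huv hxy hux huy hvx hvy :=
    hpos.uncrossed huv hxy (hf.ne hux) (hf.ne huy) (hf.ne hvx) (hf.ne hvy)

lemma uncrossed_of_connected (hpos : IsNoncrossingDrawing G pos) {A B : Set V}
    (hA : (G.induce A).Connected) (hB : (G.induce B).Connected) (hAB : Disjoint A B)
    {a a' b b' : V} (ha : a ∈ A) (ha' : a' ∈ A) (hb : b ∈ B) (hb' : b' ∈ B) :
    Uncrossed (pos a) (pos a') (pos b) (pos b') := by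
  have pos_ne {x y : V} (hx : x ∈ A) (hy : y ∈ B) : pos x ≠ pos y :=
    hpos.injective.ne (hAB.ne_of_mem hx hy)
  have edge_uncrossed (u : V) (hu : u ∈ A) (v : V) (hv : v ∈ A) (huv : G.Adj u v) :
      Uncrossed (pos u) (pos v) (pos b) (pos b') :=
    iff_of_connected_induce hB (P := fun z => pos z ∈ Set.uIoo (pos u) (pos v))
      (fun x hx y hy hxy => hpos.uncrossed huv hxy (hAB.ne_of_mem hu hx) (hAB.ne_of_mem hu hy)
        (hAB.ne_of_mem hv hx) (hAB.ne_of_mem hv hy)) hb hb'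
  have uncrossed_edge : Uncrossed (pos b) (pos b') (pos a) (pos a') :=
    iff_of_connected_induce hA (P := fun z => pos z ∈ Set.uIoo (pos b) (pos b'))
      (fun u hu v hv huv => (edge_uncrossed u hu v hv huv).symm (pos_ne hu hb) (pos_ne hu hb')
        (pos_ne hv hb) (pos_ne hv hb')) ha ha'
  exact uncrossed_edge.symm (pos_ne ha hb).symm (pos_ne ha' hb).symm (pos_ne ha hb').symm
    (pos_ne ha' hb').symm

lemma exists_of_hasMinor (hpos : IsNoncrossingDrawing G pos) (hGH : HasMinor G H) :
    ∃ pos' : W → α, IsNoncrossingDrawing H pos' := by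
  obtain ⟨f, hne, hconn, hdisj, hadj⟩ := hGH
  choose r hr using hne
  have connected_union {a b : W} (hab : H.Adj a b) : (G.induce (f a ∪ f b)).Connected := by
    obtain ⟨x, hx, y, hy, hxy⟩ := hadj hab
    exact connected_induce_union (hconn a).preconnected (hconn b).preconnected hx hy hxy
  refine ⟨pos ∘ r, hpos.injective.comp fun a b hab => ?_, fun a b x y hab hxy hax hay hbx hby => ?_⟩
  · by_contra hne
    exact (hdisj hne).ne_of_mem (hr a) (hr b) hab
  · refine hpos.uncrossed_of_connected (connected_union hab) (connected_union hxy) ?_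
      (Or.inl (hr a)) (Or.inr (hr b)) (Or.inl (hr x)) (Or.inr (hr y))
    simp only [Set.disjoint_union_left, Set.disjoint_union_right]
    exact ⟨⟨hdisj hax, hdisj hbx⟩, hdisj hay, hdisj hby⟩

end IsNoncrossingDrawing

lemma not_isNoncrossingDrawing_completeGraph_four (pos : Fin 4 → α) :
    ¬ IsNoncrossingDrawing (completeGraph (Fin 4)) pos := by
  intro hpos
  have pos_ne {i j : Fin 4} (hij : i ≠ j) : pos i ≠ pos j := hpos.injective.ne hij
  have uncrossed {i j k l : Fin 4} (hij : i ≠ j) (hkl : k ≠ l) :=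
    hpos.uncrossed (u := i) (v := j) (x := k) (y := l) hij hkl
  exact not_uncrossed_of_uncrossed (pos_ne (i := 0) (j := 1) (by decide))
    (pos_ne (j := 2) (by decide)) (pos_ne (j := 3) (by decide)) (pos_ne (by decide))
    (pos_ne (by decide)) (pos_ne (by decide))
    (by apply uncrossed <;> decide) (by apply uncrossed <;> decide)
    (by apply uncrossed <;> decide)

lemma not_isNoncrossingDrawing_completeBipartiteGraph_two_three (pos : Fin 2 ⊕ Fin 3 → α) :
    ¬ IsNoncrossingDrawing (completeBipartiteGraph (Fin 2) (Fin 3)) pos := by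
  intro hpos
  have pos_ne {v w : Fin 2 ⊕ Fin 3} (h : v ≠ w) : pos v ≠ pos w := hpos.injective.ne h
  have uncrossed {i j : Fin 3} (hij : i ≠ j) :
      Uncrossed (pos (.inl 0)) (pos (.inr i)) (pos (.inl 1)) (pos (.inr j)) := by
    apply hpos.uncrossed <;> simp [hij]
  obtain ⟨i, j, hij, same_side⟩ :
      ∃ i j, i ≠ j ∧ Uncrossed (pos (.inl 0)) (pos (.inl 1)) (pos (.inr i)) (pos (.inr j)) := by
    obtain ⟨i, j, hij, h⟩ := Fintype.exists_ne_map_eq_of_card_lt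
      (fun i : Fin 3 => pos (.inr i) ∈ Set.uIoo (pos (.inl 0)) (pos (.inl 1))) (by simp)
    exact ⟨i, j, hij, iff_of_eq h⟩
  exact not_uncrossed_of_uncrossed (pos_ne (by simp)) (pos_ne (by simp)) (pos_ne (by simp))
    (pos_ne (by simp)) (pos_ne (by simp)) (pos_ne (by simpa using hij)) (uncrossed hij)
    (uncrossed hij.symm) same_side

lemma IsNoncrossingDrawing.isOuterplanar {G : SimpleGraph V} {pos : V → α}
    (hpos : IsNoncrossingDrawing G pos) : IsOuterplanar G := by
  constructor <;> intro hminor <;> obtain ⟨pos', hpos'⟩ := hpos.exists_of_hasMinor hminor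
  · exact not_isNoncrossingDrawing_completeGraph_four pos' hpos'
  · exact not_isNoncrossingDrawing_completeBipartiteGraph_two_three pos' hpos'

end Drawings

section Minors

variable {V : Type*} {G : SimpleGraph V}

lemma hasMinor_completeGraph_of_lt {ι : Type*} [LinearOrder ι] {f : ι → Set V}
    (hconn : ∀ i, (G.induce (f i)).Connected) (hdisj : ∀ ⦃i j⦄, i < j → Disjoint (f i) (f j))
    (hadj : ∀ ⦃i j⦄, i < j → ∃ a ∈ f i, ∃ b ∈ f j, G.Adj a b) :
    HasMinor G (completeGraph ι) := by
  refine ⟨f, fun i => Set.nonempty_coe_sort.1 (hconn i).nonempty, hconn,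
    (pairwise_disjoint_on f).2 hdisj, fun i j hij => ?_⟩
  obtain hlt | hgt := lt_or_gt_of_ne (show i ≠ j from hij)
  · exact hadj hlt
  · obtain ⟨a, ha, b, hb, hab⟩ := hadj hgt
    exact ⟨b, hb, a, ha, hab.symm⟩

lemma hasMinor_completeGraph_four {X Y : Set V} {a b : V} (hX : (G.induce X).Connected)
    (hY : (G.induce Y).Connected) (hXY : Disjoint X Y) (haX : a ∉ X) (haY : a ∉ Y) (hbX : b ∉ X)
    (hbY : b ∉ Y) (hab : G.Adj a b) (adjXY : ∃ x ∈ X, ∃ y ∈ Y, G.Adj x y)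
    (adjXa : ∃ x ∈ X, G.Adj x a) (adjXb : ∃ x ∈ X, G.Adj x b) (adjYa : ∃ y ∈ Y, G.Adj y a)
    (adjYb : ∃ y ∈ Y, G.Adj y b) : HasMinor G (completeGraph (Fin 4)) := by
  refine hasMinor_completeGraph_of_lt (f := ![X, Y, {a}, {b}]) ?_ ?_ ?_
  · simp [Fin.forall_fin_succ, hX, hY]
  · simp [Fin.forall_fin_succ, hXY, haX, haY, hbX, hbY, hab.ne']
  · simp [Fin.forall_fin_succ, hab, adjXY, adjXa, adjXb, adjYa, adjYb]

end Minors

/-- The infinite triangulated strip whose vertices `0, 1, 2, …`, added in this order, lie on the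
sides of the strip given by `c`: each vertex is joined to all later ones up to and including the
next vertex on its own side. -/
def strip (c : ℕ → Bool) : SimpleGraph ℕ :=
  SimpleGraph.fromRel fun i j => i < j ∧ ∀ k ∈ Set.Ioo i j, c k ≠ c i

/-- The path-like outerplanar graph on `n` vertices with word of sides `c`: the initial segment of
length `n` of the infinite strip. -/
def stripGraph (n : ℕ) (c : ℕ → Bool) : SimpleGraph (Fin n) :=
  (strip c).comap (↑)

/-- A rung of the strip: an edge joining its two sides, from its earlier end `i` to its later
end `j`. -/
structure IsRung (c : ℕ → Bool) (i j : ℕ) : Prop where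
  lt : i < j
  ne : c i ≠ c j
  adj : (strip c).Adj i j

section Strip

variable {c d : ℕ → Bool} {i j k x y : ℕ}

lemma strip_adj_iff_of_lt (hij : i < j) :
    (strip c).Adj i j ↔ ∀ k ∈ Set.Ioo i j, c k ≠ c i := by
  simp [strip, hij, hij.ne, hij.not_gt]

lemma strip_adj_succ (c : ℕ → Bool) (i : ℕ) : (strip c).Adj i (i + 1) :=
  (strip_adj_iff_of_lt i.lt_succ_self).2 fun k hk => by grind

lemma strip_adj_add_two_iff : (strip c).Adj i (i + 2) ↔ c (i + 1) ≠ c i := by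
  rw [strip_adj_iff_of_lt (by lia)]
  exact ⟨fun h => h _ (by simp), fun h k hk => by grind⟩

lemma IsRung.adj_succ (h : IsRung c i j) : (strip c).Adj i (j + 1) := by
  have hadj := (strip_adj_iff_of_lt h.lt).1 h.adj
  refine (strip_adj_iff_of_lt (h.lt.trans j.lt_succ_self)).2 fun k hk => ?_
  obtain hkj | rfl := Nat.lt_succ_iff_lt_or_eq.1 hk.2
  · exact hadj k ⟨hk.1, hkj⟩
  · exact h.ne.symm

lemma eq_succ_of_strip_adj_of_strip_adj (hij : i < j) (hjx : j < x) (hi : (strip c).Adj i x)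
    (hj : (strip c).Adj j x) : x = j + 1 := by
  rw [strip_adj_iff_of_lt (hij.trans hjx)] at hi
  rw [strip_adj_iff_of_lt hjx] at hj
  by_contra hne
  have hcj : c j ≠ c i := hi j ⟨hij, hjx⟩
  have hcsucc : c (j + 1) ≠ c i := hi (j + 1) ⟨by lia, by lia⟩
  have hcsucc' : c (j + 1) ≠ c j := hj (j + 1) ⟨by lia, by lia⟩
  rw [← Bool.eq_not] at hcj hcsucc hcsucc'
  simp [hcsucc, hcj] at hcsucc'

lemma exists_strip_adj_lt (hc : c 0 ≠ c 1) (hk : 2 ≤ k) (b : Bool) :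
    ∃ m < k, c m = b ∧ (strip c).Adj m k := by
  obtain ⟨m₀, hm₀, hb⟩ : ∃ m₀ ≤ k - 1, c m₀ = b := by
    by_cases h : c 0 = b
    · exact ⟨0, by lia, h⟩
    · exact ⟨1, by lia, by rw [Bool.eq_not.2 hc.symm, Bool.eq_not.2 h, Bool.not_not]⟩
  have hlast : c (Nat.findGreatest (c · = b) (k - 1)) = b :=
    Nat.findGreatest_spec (P := (c · = b)) hm₀ hb
  have hlt : Nat.findGreatest (c · = b) (k - 1) < k := by
    have := Nat.findGreatest_le (P := (c · = b)) (k - 1)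
    lia
  refine ⟨_, hlt, hlast, (strip_adj_iff_of_lt hlt).2 fun l hl => ?_⟩
  rw [hlast]
  exact Nat.findGreatest_is_greatest hl.1 (Nat.le_sub_one_of_lt hl.2)

lemma exists_isRung_pos (hc : c 0 ≠ c 1) (hc' : c 2 = c 0) (hk : 2 ≤ k) :
    ∃ m, 0 < m ∧ IsRung c m k := by
  obtain ⟨m, hmk, hcm, hadj⟩ := exists_strip_adj_lt hc hk (!c k)
  refine ⟨m, Nat.pos_of_ne_zero ?_, hmk, by simp [hcm], hadj⟩
  rintro rfl
  have := (strip_adj_iff_of_lt hmk).1 hadj 2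
  grind

lemma strip_connected_initial (hc : c 0 ≠ c 1) (hi : 0 < i) (hj : 0 < j) :
    ((strip c).induce (Set.Iio j \ {i})).Connected := by
  refine connected_induce_of_forall_exists_lt (r := 0) ⟨hj, hi.ne⟩ fun k ⟨hkj, _⟩ hk0 => ?_
  rw [Set.mem_Iio] at hkj
  by_cases hki : k = i + 1
  · obtain ⟨m, hmk, hcm, hadj⟩ := exists_strip_adj_lt hc (k := k) (by lia) (!c i)
    exact ⟨m, ⟨hmk.trans hkj, by rintro rfl; simp at hcm⟩, hmk, hadj⟩
  · obtain ⟨l, rfl⟩ := Nat.exists_eq_succ_of_ne_zero hk0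
    exact ⟨l, ⟨by grind, by grind⟩, l.lt_succ_self, strip_adj_succ c l⟩

lemma strip_connected_Ioo (c : ℕ → Bool) (hij : i + 1 < j) :
    ((strip c).induce (Set.Ioo i j)).Connected := by
  refine connected_induce_of_forall_exists_lt (r := i + 1) ⟨i.lt_succ_self, hij⟩
    fun k ⟨hik, hkj⟩ hk => ?_
  obtain ⟨l, rfl⟩ := Nat.exists_eq_succ_of_ne_zero (Nat.ne_zero_of_lt hik)
  exact ⟨l, ⟨by lia, by lia⟩, l.lt_succ_self, strip_adj_succ c l⟩

lemma sides_eq_of_strip_adj_iff {n : ℕ} (h0 : c 0 = d 0)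
    (h : ∀ i < n, ∀ j < n, (strip c).Adj i j ↔ (strip d).Adj i j) (hk : k + 1 < n) :
    c k = d k := by
  induction k with
  | zero => exact h0
  | succ k ih =>
    have hk2 := h k (by lia) (k + 2) hk
    rw [strip_adj_add_two_iff, strip_adj_add_two_iff, ih (by lia)] at hk2
    exact Bool.eq_iff_iff.2 (by cases hdk : d k <;> simpa [hdk] using hk2)

/-- The position of the vertex `k` of the strip in an outerplanar drawing: the two sides extend in
opposite directions from the start of the strip. -/
def stripPos (c : ℕ → Bool) (k : ℕ) : ℤ :=
  if c k then k else Int.negSucc k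

lemma stripPos_mem_uIoo_iff (hij : i < j) (hadj : (strip c).Adj i j) (hxi : x ≠ i) (hxj : x ≠ j) :
    stripPos c x ∈ Set.uIoo (stripPos c i) (stripPos c j) ↔ c i ≠ c j ∧ x < j := by
  have hx := (strip_adj_iff_of_lt hij).1 hadj x
  simp only [stripPos, Set.uIoo, Set.mem_Ioo, inf_lt_iff, lt_sup_iff] at *
  grind

lemma not_lt_of_strip_adj (hij : i < j) (hadj : (strip c).Adj i j) (hcij : c i ≠ c j)
    (hxy : (strip c).Adj x y) (hxi : x ≠ i) (hxj : x < j) : ¬ j < y := by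
  intro hjy
  have hc := (strip_adj_iff_of_lt (hxj.trans hjy)).1 hxy
  have hcj : c j = !c x := Bool.eq_not.2 (hc j ⟨hxj, hjy⟩)
  obtain hlt | hgt := lt_or_gt_of_ne hxi
  · have hci : c i = !c x := Bool.eq_not.2 (hc i ⟨hlt, hij.trans hjy⟩)
    exact hcij (hci.trans hcj.symm)
  · have hcx : c x = !c i := Bool.eq_not.2 ((strip_adj_iff_of_lt hij).1 hadj x ⟨hgt, hxj⟩)
    exact hcij (by rw [hcj, hcx, Bool.not_not])

lemma isNoncrossingDrawing_stripPos (c : ℕ → Bool) :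
    IsNoncrossingDrawing (strip c) (stripPos c) where
  injective i j hij := by
    simp only [stripPos] at hij
    grind
  uncrossed u v x y huv hxy hux huy hvx hvy := by
    wlog huv' : u < v generalizing u v
    · have := this v u huv.symm hvx hvy hux huy (by grind [huv.ne])
      rwa [Uncrossed, Set.uIoo_comm] at this
    have := not_lt_of_strip_adj huv' huv (x := x) (y := y)
    have := not_lt_of_strip_adj huv' huv (x := y) (y := x)
    rw [Uncrossed, stripPos_mem_uIoo_iff huv' huv hux.symm hvx.symm,
      stripPos_mem_uIoo_iff huv' huv huy.symm hvy.symm]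
    grind [hxy.symm]

lemma isOuterplanar_stripGraph (n : ℕ) (c : ℕ → Bool) : IsOuterplanar (stripGraph n c) :=
  ((isNoncrossingDrawing_stripPos c).comap Fin.val_injective).isOuterplanar

end Strip

/-- The map `f` embeds the strip with `n` vertices and word of sides `c` into `G`, not necessarily
as an induced subgraph. Only the values of `f` below `n` matter. -/
structure IsStripEmbedding {V : Type*} (G : SimpleGraph V) (n : ℕ) (c : ℕ → Bool) (f : ℕ → V) :
    Prop where
  injOn : Set.InjOn f (Set.Iio n)
  map_adj : ∀ i < n, ∀ j < n, (strip c).Adj i j → G.Adj (f i) (f j)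

lemma exists_isStripEmbedding_of_contains {V : Type*} {G : SimpleGraph V} {n : ℕ} (hn : 0 < n)
    {c : ℕ → Bool} (h : Contains G (stripGraph n c)) : ∃ f, IsStripEmbedding G n c f := by
  obtain ⟨f, hf⟩ := h
  have extend_apply {i : ℕ} (hi : i < n) :
      Function.extend Fin.val f (fun _ => f ⟨0, hn⟩) i = f ⟨i, hi⟩ :=
    Fin.val_injective.extend_apply f _ ⟨i, hi⟩
  refine ⟨Function.extend Fin.val f fun _ => f ⟨0, hn⟩, fun i hi j hj hij => ?_,
    fun i hi j hj hij => ?_⟩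
  · rw [extend_apply hi, extend_apply hj] at hij
    exact congrArg Fin.val (f.injective hij)
  · rw [extend_apply hi, extend_apply hj]
    exact hf hij

/-- The first four vertices of the strip lie on alternating sides. Among the strips with this start,
a strip is determined by its adjacencies, which do not change when the two sides are exchanged. -/
structure StartsAlternating (c : ℕ → Bool) : Prop where
  zero : c 0 = false
  one : c 1 = true
  two : c 2 = false
  three : c 3 = true

namespace StartsAlternating

variable {c : ℕ → Bool}

lemma zero_ne_one (hc : StartsAlternating c) : c 0 ≠ c 1 := by
  simp [hc.zero, hc.one]

lemma two_eq_zero (hc : StartsAlternating c) : c 2 = c 0 :=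
  hc.two.trans hc.zero.symm

end StartsAlternating

namespace IsStripEmbedding

variable {V : Type*} {G : SimpleGraph V} {n : ℕ} {c d : ℕ → Bool} {f g : ℕ → V} {φ : ℕ → ℕ}

lemma mem_image_iff (hf : IsStripEmbedding G n c f) {A : Set ℕ} (hA : A ⊆ Set.Iio n) {k : ℕ}
    (hk : k < n) : f k ∈ f '' A ↔ k ∈ A :=
  hf.injOn.mem_image_iff hA hk

lemma connected_image (hf : IsStripEmbedding G n c f) {A : Set ℕ} (hA : A ⊆ Set.Iio n)
    (hconn : ((strip c).induce A).Connected) : (G.induce (f '' A)).Connected :=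
  connected_induce_image (fun i hi j hj => hf.map_adj i (hA hi) j (hA hj)) hconn

lemma connected_image_diff_singleton (hf : IsStripEmbedding G n c f) (hc : c 0 ≠ c 1)
    (hn : 0 < n) {v : V} (hv : v ≠ f 0) : (G.induce (f '' Set.Iio n \ {v})).Connected := by
  obtain ⟨i, hi, himage⟩ : ∃ i, 0 < i ∧ f '' Set.Iio n \ {v} = f '' (Set.Iio n \ {i}) := by
    by_cases hvf : v ∈ f '' Set.Iio n
    · obtain ⟨i, hi, rfl⟩ := hvf
      refine ⟨i, Nat.pos_of_ne_zero fun h => hv (by rw [h]), ?_⟩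
      rw [hf.injOn.image_sdiff_subset (Set.singleton_subset_iff.2 hi), Set.image_singleton]
    · exact ⟨n, hn, by simp [hvf]⟩
  rw [himage]
  exact hf.connected_image Set.sdiff_subset (strip_connected_initial hc hi hn)

lemma mem_or_mem_of_isRung (hf : IsStripEmbedding G n c f)
    (hG : ¬ HasMinor G (completeGraph (Fin 4))) (hc : c 0 ≠ c 1) {i j p q : ℕ} (hi : 0 < i)
    (hij : IsRung c i j) (hpj : p < j) (hpi : p ≠ i) (hjq : j < q) (hqn : q < n) {C : Set V}
    (hC : (G.induce C).Connected) (hpC : f p ∈ C) (hqC : f q ∈ C) : f i ∈ C ∨ f j ∈ C := by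
  by_contra! ⟨hiC, hjC⟩
  have hlt := hij.lt
  have early_subset : Set.Iio j \ {i} ⊆ Set.Iio n := fun k hk => by grind
  have late_subset : Set.Ioo j n ⊆ Set.Iio n := fun k hk => hk.2
  have early_connected := hf.connected_image early_subset
    (strip_connected_initial hc hi (hi.trans hlt))
  have late_connected := hf.connected_image late_subset (strip_connected_Ioo c (by lia))
  have disjoint_early_late : Disjoint (f '' (Set.Iio j \ {i})) (f '' Set.Ioo j n) :=
    Set.disjoint_image_image fun k hk l hl => hf.injOn.ne (early_subset hk) hl.2 (by grind)
  obtain ⟨Y, hlateY, hYsub, hdisj, hY, hXY⟩ :=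
    exists_connected_superset_adj late_connected hC disjoint_early_late
      ⟨f p, ⟨p, ⟨hpj, hpi⟩, rfl⟩, hpC⟩ ⟨f q, ⟨q, ⟨hjq, hqn⟩, rfl⟩, hqC⟩
  have notMem_early {k : ℕ} (hk : k < n) (hk' : k ∉ Set.Iio j \ {i}) :
      f k ∉ f '' (Set.Iio j \ {i}) := mt (hf.mem_image_iff early_subset hk).1 hk'
  have notMem_Y {k : ℕ} (hkj : k ≤ j) (hkC : f k ∉ C) : f k ∉ Y := fun hkY =>
    (hYsub hkY).elim
      (fun h => hkj.not_gt ((hf.mem_image_iff late_subset (by lia)).1 h).1) hkC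
  have succ_mem_Y : f (j + 1) ∈ Y := hlateY ⟨j + 1, ⟨by lia, by lia⟩, rfl⟩
  obtain ⟨m, hmj, hcm, hadj⟩ := exists_strip_adj_lt hc (k := j) (by lia) (c j)
  have hmi : m ≠ i := fun h => hij.ne (h ▸ hcm)
  refine hG (hasMinor_completeGraph_four early_connected hY hdisj
    (notMem_early (by lia) (by simp)) (notMem_Y hlt.le hiC)
    (notMem_early (by lia) (by simp)) (notMem_Y le_rfl hjC)
    (hf.map_adj i (by lia) j (by lia) hij.adj) hXY
    ⟨f (i - 1), ⟨i - 1, ⟨by grind, by grind⟩, rfl⟩, hf.map_adj _ (by lia) _ (by lia) ?_⟩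
    ⟨f m, ⟨m, ⟨hmj, hmi⟩, rfl⟩, hf.map_adj m (by lia) j (by lia) hadj⟩
    ⟨f (j + 1), succ_mem_Y, (hf.map_adj i (by lia) (j + 1) (by lia) hij.adj_succ).symm⟩
    ⟨f (j + 1), succ_mem_Y, (hf.map_adj j (by lia) (j + 1) (by lia) (strip_adj_succ c j)).symm⟩)
  simpa [Nat.sub_add_cancel hi] using strip_adj_succ c (i - 1)

lemma adj_iff (hf : IsStripEmbedding G n c f) (hG : ¬ HasMinor G (completeGraph (Fin 4)))
    (hc : c 0 ≠ c 1) (hc' : c 2 = c 0) {p q : ℕ} (hp : p < n) (hq : q < n) :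
    G.Adj (f p) (f q) ↔ (strip c).Adj p q := by
  refine ⟨fun hadj => ?_, hf.map_adj p hp q hq⟩
  wlog hpq : p < q generalizing p q
  · have hne : p ≠ q := fun h => hadj.ne (congrArg f h)
    exact (this hq hp hadj.symm (by lia)).symm
  refine (strip_adj_iff_of_lt hpq).2 fun k ⟨hpk, hkq⟩ hck => ?_
  have hk : 2 ≤ k := by
    by_contra
    obtain rfl : k = 1 := by lia
    obtain rfl : p = 0 := by lia
    exact hc hck.symm
  obtain ⟨m, hm, hrung⟩ := exists_isRung_pos hc hc' hk
  have hmk := hrung.lt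
  have hpm : p ≠ m := fun h => hrung.ne (h ▸ hck.symm)
  have hmeet := hf.mem_or_mem_of_isRung hG hc hm hrung hpk hpm hkq hq
    (induce_pair_connected_of_adj hadj) (by simp) (by simp)
  simp only [Set.mem_insert_iff, Set.mem_singleton_iff] at hmeet
  have hinj {a b : ℕ} (ha : a < n) (hb : b < n) : f a = f b ↔ a = b := hf.injOn.eq_iff ha hb
  rw [hinj (by lia) hp, hinj (by lia) hq, hinj (by lia) hp, hinj (by lia) hq] at hmeet
  lia

lemma mem_image_of_endpoints_eq (hf : IsStripEmbedding G n c f) (hg : IsStripEmbedding G n d g)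
    (hG : ¬ HasMinor G (completeGraph (Fin 4))) (hn : 4 ≤ n) (hc : c 0 ≠ c 1) (hc' : c 2 = c 0)
    (hd : d 0 ≠ d 1) (hfirst : f 0 = g 0) (hlast : f (n - 1) = g (n - 1)) {k : ℕ} (hk : k < n) :
    f k ∈ g '' Set.Iio n := by
  have first_mem : f 0 ∈ g '' Set.Iio n := ⟨0, Set.mem_Iio.2 (by lia), hfirst.symm⟩
  have last_mem : f (n - 1) ∈ g '' Set.Iio n := ⟨n - 1, Set.mem_Iio.2 (by lia), hlast.symm⟩
  obtain rfl | hk0 := eq_or_ne k 0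
  · exact first_mem
  obtain rfl | hk1 := eq_or_ne k (n - 1)
  · exact last_mem
  have first_ne {i : ℕ} (hi : 0 < i) (hin : i < n) : f 0 ≠ f i :=
    hf.injOn.ne (Set.mem_Iio.2 (by lia)) hin hi.ne
  have connected_avoiding {i : ℕ} (hi : 0 < i) (hin : i < n) :
      (G.induce (g '' Set.Iio n \ {f i})).Connected :=
    hg.connected_image_diff_singleton hd (by lia) (hfirst ▸ (first_ne hi hin).symm)
  have last_ne {i : ℕ} (hin : i < n - 1) : f (n - 1) ≠ f i :=
    hf.injOn.ne (Set.mem_Iio.2 (by lia)) (Set.mem_Iio.2 (by lia)) hin.ne'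
  have rung_meets {i j l : ℕ} (hi : 0 < i) (hij : IsRung c i j) (hj : j < n - 1) (hl : 0 < l)
      (hln : l < n - 1) : f i ∈ g '' Set.Iio n \ {f l} ∨ f j ∈ g '' Set.Iio n \ {f l} :=
    hf.mem_or_mem_of_isRung hG hc hi hij (hi.trans hij.lt) hi.ne hj (by lia)
      (connected_avoiding hl (by lia)) ⟨first_mem, first_ne hl (by lia)⟩ ⟨last_mem, last_ne hln⟩
  obtain hk2 | rfl : 2 ≤ k ∨ k = 1 := by lia
  · obtain ⟨m, hm, hrung⟩ := exists_isRung_pos hc hc' hk2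
    have hmk := hrung.lt
    exact ((rung_meets hm hrung (by lia) hm (by lia)).resolve_left fun h => h.2 rfl).1
  · have hrung : IsRung c 1 2 := ⟨by simp, by rw [hc']; exact hc.symm, strip_adj_succ c 1⟩
    exact ((rung_meets one_pos hrung (by lia) two_pos (by lia)).resolve_right fun h => h.2 rfl).1

/-- The only other possibility is that `φ` exchanges `1` and `2`, but `2` has four neighbours in the
strip of `c` while `1` has only three in the strip of `d`. -/
lemma apply_one_eq_one (hφ : IsStripEmbedding (strip d) n c φ) (hn : 5 ≤ n)
    (hc : StartsAlternating c) (hd : StartsAlternating d) (h0 : φ 0 = 0) : φ 1 = 1 := by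
  have neighbour_zero {x : ℕ} (hx : (strip d).Adj 0 x) : x = 1 ∨ x = 2 := by
    have := (strip_adj_iff_of_lt (Nat.pos_of_ne_zero hx.ne')).1 hx 2
    grind [hx.ne, hd.zero, hd.two]
  have neighbour_one {x : ℕ} (hx : (strip d).Adj 1 x) : x = 0 ∨ x = 2 ∨ x = 3 := by
    by_cases h : 1 < x
    · have := (strip_adj_iff_of_lt h).1 hx 3
      grind [hd.one, hd.three]
    · grind [hx.ne]
  have adj01 := hφ.map_adj 0 (by lia) 1 (by lia) (strip_adj_succ c 0)
  have adj02 := hφ.map_adj 0 (by lia) 2 (by lia)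
    (strip_adj_add_two_iff.2 (by simp [hc.zero, hc.one]))
  have adj23 := hφ.map_adj 2 (by lia) 3 (by lia) (strip_adj_succ c 2)
  have adj24 := hφ.map_adj 2 (by lia) 4 (by lia)
    (strip_adj_add_two_iff.2 (by simp [hc.two, hc.three]))
  have ne {i j : ℕ} (hi : i < n) (hj : j < n) (hij : i ≠ j) : φ i ≠ φ j := hφ.injOn.ne hi hj hij
  rw [h0] at adj01 adj02
  refine (neighbour_zero adj01).resolve_right fun h1 => ?_
  have h2 : φ 2 = 1 := (neighbour_zero adj02).resolve_right fun h2 =>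
    ne (i := 1) (j := 2) (by lia) (by lia) (by simp) (h1.trans h2.symm)
  rw [h2] at adj23 adj24
  have eq_three {i : ℕ} (hi : i < n) (hi2 : 2 < i) (hadj : (strip d).Adj 1 (φ i)) : φ i = 3 := by
    have := ne hi (j := 0) (by lia) (by lia)
    have := ne hi (j := 1) (by lia) (by lia)
    have := neighbour_one hadj
    lia
  exact ne (i := 3) (j := 4) (by lia) (by lia) (by simp)
    ((eq_three (by lia) (by simp) adj23).trans (eq_three (by lia) (by simp) adj24).symm)

lemma apply_eq_self (hφ : IsStripEmbedding (strip d) n c φ) (hn : 5 ≤ n)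
    (hc : StartsAlternating c) (hd : StartsAlternating d) (h0 : φ 0 = 0)
    {k : ℕ} (hk : k < n) : φ k = k := by
  induction k using Nat.strong_induction_on with
  | h k ih =>
    obtain rfl | rfl | ⟨l, rfl⟩ : k = 0 ∨ k = 1 ∨ ∃ l, k = l + 2 := by
      obtain _ | _ | l := k <;> simp
    · exact h0
    · exact hφ.apply_one_eq_one hn hc hd h0
    · have adj_last := hφ.map_adj _ (by lia) _ hk (strip_adj_succ c (l + 1))
      obtain ⟨m, hm, hcm, hadj⟩ :=
        exists_strip_adj_lt hc.zero_ne_one (k := l + 2) (by lia) (!c (l + 1))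
      have hml : m ≠ l + 1 := by rintro rfl; simp at hcm
      have adj_other := hφ.map_adj m (by lia) _ hk hadj
      rw [ih m hm (by lia)] at adj_other
      rw [ih (l + 1) (by lia) (by lia)] at adj_last
      have hgt : l + 1 < φ (l + 2) := by
        by_contra! hle
        have := hφ.injOn (show φ (l + 2) ∈ Set.Iio n by grind) hk (ih _ (by lia) (by lia))
        lia
      exact eq_succ_of_strip_adj_of_strip_adj (by lia) hgt adj_other adj_last

lemma eqOn_of_endpoints_eq (hf : IsStripEmbedding G n c f) (hg : IsStripEmbedding G n d g)
    (hG : ¬ HasMinor G (completeGraph (Fin 4))) (hn : 5 ≤ n)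
    (hc : StartsAlternating c) (hd : StartsAlternating d)
    (hfirst : f 0 = g 0) (hlast : f (n - 1) = g (n - 1)) : Set.EqOn f g (Set.Iio n) := by
  choose! φ φ_lt hφ using fun k (hk : k ∈ Set.Iio n) =>
    hf.mem_image_of_endpoints_eq hg hG (by lia) hc.zero_ne_one hc.two_eq_zero hd.zero_ne_one
      hfirst hlast hk
  have embedding : IsStripEmbedding (strip d) n c φ :=
    { injOn := fun i hi j hj hij => hf.injOn hi hj (by rw [← hφ i hi, ← hφ j hj, hij])
      map_adj := fun i hi j hj hij => by
        rw [← hg.adj_iff hG hd.zero_ne_one hd.two_eq_zero (φ_lt i hi) (φ_lt j hj), hφ i hi, hφ j hj]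
        exact hf.map_adj i hi j hj hij }
  have zero_lt : 0 < n := by lia
  have φ_zero : φ 0 = 0 := hg.injOn (φ_lt 0 zero_lt) zero_lt ((hφ 0 zero_lt).trans hfirst)
  intro k hk
  rw [← hφ k hk, embedding.apply_eq_self hn hc hd φ_zero hk]

lemma sides_eq_of_endpoints_eq (hf : IsStripEmbedding G n c f) (hg : IsStripEmbedding G n d g)
    (hG : ¬ HasMinor G (completeGraph (Fin 4))) (hn : 5 ≤ n)
    (hc : StartsAlternating c) (hd : StartsAlternating d)
    (hfirst : f 0 = g 0) (hlast : f (n - 1) = g (n - 1)) {k : ℕ} (hk : k + 1 < n) :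
    c k = d k := by
  have hfg := hf.eqOn_of_endpoints_eq hg hG hn hc hd hfirst hlast
  refine sides_eq_of_strip_adj_iff (hc.zero.trans hd.zero.symm) (fun i hi j hj => ?_) hk
  rw [← hf.adj_iff hG hc.zero_ne_one hc.two_eq_zero hi hj, hfg hi, hfg hj,
    hg.adj_iff hG hd.zero_ne_one hd.two_eq_zero hi hj]

end IsStripEmbedding

/-- The word of sides that starts with four alternating letters and continues with `w`. The letters
after the end of `w` are arbitrary. -/
noncomputable def alternatingThen {m : ℕ} (w : Fin m → Bool) : ℕ → Bool :=
  Function.extend (fun i : Fin m => (i : ℕ) + 4) w Nat.bodd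

lemma alternatingThen_of_lt_four {m : ℕ} (w : Fin m → Bool) {k : ℕ} (hk : k < 4) :
    alternatingThen w k = k.bodd :=
  Function.extend_apply' _ _ _ fun ⟨i, hi⟩ => by lia

lemma startsAlternating_alternatingThen {m : ℕ} (w : Fin m → Bool) :
    StartsAlternating (alternatingThen w) := by
  constructor <;> rw [alternatingThen_of_lt_four w (by simp)] <;> rfl

lemma alternatingThen_add_four {m : ℕ} (w : Fin m → Bool) (i : Fin m) :
    alternatingThen w (i + 4) = w i :=
  ((add_left_injective 4).comp Fin.val_injective).extend_apply w _ i

lemma two_pow_le_card_sq {n : ℕ} (hn : 5 ≤ n) {V : Type*} [Fintype V] {G : SimpleGraph V}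
    (hG : ¬ HasMinor G (completeGraph (Fin 4)))
    (huniv : ∀ c : ℕ → Bool, Contains G (stripGraph n c)) :
    2 ^ (n - 5) ≤ Fintype.card V ^ 2 := by
  choose f hf using fun w : Fin (n - 5) → Bool =>
    exists_isStripEmbedding_of_contains (by lia) (huniv (alternatingThen w))
  have endpoints_injective : Function.Injective fun w => (f w 0, f w (n - 1)) := by
    intro w w' h
    obtain ⟨hfirst, hlast⟩ := Prod.ext_iff.1 h
    funext i
    rw [← alternatingThen_add_four w, ← alternatingThen_add_four w']
    exact (hf w).sides_eq_of_endpoints_eq (hf w') hG hn (startsAlternating_alternatingThen w)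
      (startsAlternating_alternatingThen w') hfirst hlast (by lia)
  simpa [sq] using Fintype.card_le_of_injective _ endpoints_injective

theorem outerplanar_universal_lower_bound_general (n : ℕ) (hn : 5 ≤ n) {V : Type*} [Fintype V]
    (G : SimpleGraph V) (hG : ¬ HasMinor G (completeGraph (Fin 4)))
    (huniv : ∀ c : ℕ → Bool, Contains G (stripGraph n c)) :
    Real.sqrt 2 ^ (n - 5) ≤ (Fintype.card V : ℝ) := by
  refine (sq_le_sq₀ (by positivity) (Nat.cast_nonneg _)).1 ?_
  rw [← pow_mul, mul_comm, pow_mul, Real.sq_sqrt zero_le_two]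
  exact_mod_cast two_pow_le_card_sq hn hG huniv

/-- For `n ≥ 6`, any outerplanar graph containing every `n`-vertex outerplanar graph as a
subgraph has at least `√2^(n−5)` vertices. -/
theorem outerplanar_universal_lower_bound (n : ℕ) (hn : 6 ≤ n) {V : Type*} [Fintype V]
    (G : SimpleGraph V) (hG : IsOuterplanar G)
    (huniv : ∀ H : SimpleGraph (Fin n), IsOuterplanar H → Contains G H) :
    Real.sqrt 2 ^ (n - 5) ≤ (Fintype.card V : ℝ) := by
  exact outerplanar_universal_lower_bound_general n (by lia) G hG.1 fun c =>
    huniv _ (isOuterplanar_stripGraph n c)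
end

section
/- Let T be a finite tree and v a vertex of T. Then there exists a path P in T starting at v such that every connected component of T − V(P) has at most (|V(T)| − 1)/2 vertices. -/
open SimpleGraph

/-!
Grow a path from `v`, always stepping into the component of `G − V(P)` having more than
`(|V| − 1) / 2` vertices, if there is one. This is possible because the endpoint of `P` always has
a neighbour in such a component: `G − V(P)` has at most `|V| − 1` vertices, hence at most one large
component, so the next large component lies inside the one just entered, and a walk inside the
latter can only leave the former through the new endpoint. As `G` is finite, the growth stops.
-/

section GyarfasPath

variable {V W : Type*} {G : SimpleGraph V} {H : SimpleGraph W} {u v w : V}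

lemma eq_of_card_lt_ncard_supp_add_ncard_supp [Finite V] {c d : G.ConnectedComponent}
    (h : Nat.card V < c.supp.ncard + d.supp.ncard) : c = d := by
  by_contra hne
  have hd : Disjoint c.supp d.supp := G.pairwise_disjoint_supp_connectedComponent hne
  rw [← Set.ncard_union_eq hd] at h
  exact h.not_ge (Set.ncard_le_card _)

lemma ncard_supp_le_ncard_supp_map [Finite W] {f : G →g H} (hf : Function.Injective f)
    (c : G.ConnectedComponent) : c.supp.ncard ≤ (c.map f).supp.ncard := by
  refine Set.ncard_le_ncard_of_injOn f ?_ hf.injOn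
  rintro x rfl
  rfl

lemma exists_walk_support_subset_of_reachable_induce {A : Set V} {x y : A}
    (h : (G.induce A).Reachable x y) : ∃ p : G.Walk x y, ∀ z ∈ p.support, z ∈ A := by
  obtain ⟨p⟩ := h
  refine ⟨p.map (Embedding.induce A).toHom, fun z hz => ?_⟩
  obtain ⟨a, -, rfl⟩ := List.mem_map.mp ((p.support_map _) ▸ hz)
  exact a.2

lemma exists_adj_of_walk_leaving {A : Set V} {c : (G.induce A).ConnectedComponent} {y : A}
    (hy : y ∈ c.supp) (p : G.Walk y w) (hw : w ∉ A) :
    ∃ x ∈ c.supp, ∃ z ∈ p.support, z ∉ A ∧ G.Adj x z := by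
  have hw' : w ∉ Subtype.val '' c.supp := by
    rintro ⟨x, -, rfl⟩
    exact hw x.2
  obtain ⟨d, hd, ⟨x, hx, hxd⟩, hz⟩ := p.exists_boundary_dart _ (Set.mem_image_of_mem _ hy) hw'
  have hadj : G.Adj x d.snd := hxd ▸ d.adj
  refine ⟨x, hx, d.snd, p.dart_snd_mem_support_of_mem_darts hd, fun hA => hz ?_, hadj⟩
  exact ⟨⟨d.snd, hA⟩, c.mem_supp_of_adj_mem_supp hx hadj, rfl⟩

/-- The set of vertices off the walk `p`, so that `G.induce (offWalk p)` is `G − V(p)`. -/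
abbrev offWalk (p : G.Walk v u) : Set V := {x | x ∉ p.support}

lemma offWalk_concat_subset (p : G.Walk v u) (h : G.Adj u w) :
    offWalk (p.concat h) ⊆ offWalk p :=
  fun _ hx hxp => hx (p.support_subset_support_concat h hxp)

lemma card_offWalk_le [Fintype V] (p : G.Walk v u) :
    Nat.card (offWalk p) ≤ Fintype.card V - 1 := by
  have hlt : Nat.card (offWalk p) < Nat.card V := Finite.card_subtype_lt (x := u) (by simp)
  rw [Nat.card_eq_fintype_card (α := V)] at hlt
  exact Nat.le_sub_one_of_lt hlt

/-- The invariant of the Gyárfás path argument: the endpoint of `p` has a neighbour in every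
component of `G − V(p)` with more than `(|V| − 1) / 2` vertices. -/
def EndAdjLargeComponents [Fintype V] (p : G.Walk v u) : Prop :=
  ∀ c : (G.induce (offWalk p)).ConnectedComponent,
    Fintype.card V - 1 < 2 * c.supp.ncard → ∃ x ∈ c.supp, G.Adj u x

lemma endAdjLargeComponents_nil [Fintype V] (hG : G.Preconnected) (v : V) :
    EndAdjLargeComponents (Walk.nil : G.Walk v v) := by
  intro c _
  obtain ⟨y, hy⟩ := c.nonempty_supp
  obtain ⟨r⟩ := hG y v
  obtain ⟨x, hx, z, -, hz, hadj⟩ := exists_adj_of_walk_leaving hy r (by simp)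
  obtain rfl : z = v := by simpa using hz
  exact ⟨x, hx, hadj.symm⟩

lemma endAdjLargeComponents_concat [Fintype V] (p : G.Walk v u)
    {c : (G.induce (offWalk p)).ConnectedComponent}
    (hc : Fintype.card V - 1 < 2 * c.supp.ncard) {w : offWalk p} (hw : w ∈ c.supp)
    (h : G.Adj u w) : EndAdjLargeComponents (p.concat h) := by
  intro d hd
  let f := G.induceHomOfLE (offWalk_concat_subset p h)
  have hdc : d.map f.toHom = c := by
    apply eq_of_card_lt_ncard_supp_add_ncard_supp
    have hle : d.supp.ncard ≤ (d.map f.toHom).supp.ncard :=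
      ncard_supp_le_ncard_supp_map f.injective d
    have hcard := card_offWalk_le p
    omega
  obtain ⟨y, hy⟩ := d.nonempty_supp
  have hyc : f y ∈ c.supp := by
    rw [← hdc, ← hy]
    rfl
  obtain ⟨r, hr⟩ : ∃ r : G.Walk y w, ∀ z ∈ r.support, z ∈ offWalk p :=
    exists_walk_support_subset_of_reachable_induce (c.reachable_of_mem_supp hyc hw)
  obtain ⟨x, hx, z, hzr, hz, hadj⟩ := exists_adj_of_walk_leaving hy r (by simp)
  have hzp : z ∉ p.support := hr z hzr
  obtain rfl : z = w := by simpa [Walk.support_concat, hzp] using hz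
  exact ⟨x, hx, hadj.symm⟩

theorem exists_gyarfas_path_general [Fintype V] (hG : G.Preconnected) (v : V) :
    ∃ (u : V) (p : G.Walk v u), p.IsPath ∧
      ∀ c : (G.induce {x : V | x ∉ p.support}).ConnectedComponent,
        2 * c.supp.ncard ≤ Fintype.card V - 1 := by
  by_contra! hlarge
  have hgrow (n : ℕ) : ∃ (u : V) (p : G.Walk v u),
      p.IsPath ∧ p.length = n ∧ EndAdjLargeComponents p := by
    induction n with
    | zero => exact ⟨v, .nil, .nil, rfl, endAdjLargeComponents_nil hG v⟩
    | succ n ih =>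
      obtain ⟨u, p, hp, rfl, hend⟩ := ih
      obtain ⟨c, hc⟩ := hlarge u p hp
      obtain ⟨w, hw, hadj⟩ := hend c hc
      exact ⟨w, p.concat hadj, hp.concat w.2 hadj, p.length_concat hadj,
        endAdjLargeComponents_concat p hc hw hadj⟩
  obtain ⟨u, p, hp, hlen, -⟩ := hgrow (Fintype.card V)
  exact hp.length_lt.ne hlen

end GyarfasPath

/-- **Gyárfás path.** For every finite tree `T` and vertex `v`, there is a path `P` starting
at `v` such that every connected component of `T − V(P)` has at most `(|V(T)| − 1) / 2`
vertices. -/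
theorem exists_gyarfas_path {V : Type*} [Fintype V] (T : SimpleGraph V)
    (hT : T.IsTree) (v : V) :
    ∃ (u : V) (p : T.Walk v u), p.IsPath ∧
      ∀ c : (T.induce {x : V | x ∉ p.support}).ConnectedComponent,
        2 * c.supp.ncard ≤ Fintype.card V - 1 :=
  exists_gyarfas_path_general hT.connected.preconnected v
end
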